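/- With the covariance formulas of the theorem above, the (s,s') entry of the covariance of the 'weighted' statistics satisfies Cov(U_w, U'_w) = [2mn(m−1)(n−1)/(N(N−1)(N−2)(N−3))] · (W̃_2 − (2/(N−2))·W̃_3), where U_w = ((n−1)U_x + (m−1)U_y)/(N−2) for matrix W and U'_w likewise for W', and W̃_2, W̃_3 are as defined from the pair (W, W'). -/

import Mathlib

/-!
For `a ≠ b` let `K a b` be the contribution of a pair of labels `(a, b)` to the weighted statistic,
minus its mean `μ = (m-1)(n-1)/((N-1)(N-2))`, and let `K a a = 0`. The weights `n-1` and `m-1` are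
precisely those for which every row of `K` sums to zero (`kernel_row_sum`). Up to the additive
constant `μ ∑ W i j`, the weighted statistic is `∑ W i j * K (π i) (π j)`.

Since the law of `π` is invariant under relabelling, the moment
`∑ π, K (π i) (π j) * K (π k) (π l)` depends only on the way the pairs `(i, j)` and `(k, l)` overlap.
Summing it over one free index gives zero, because rows of `K` sum to zero; this expresses the moment
of pairs sharing one index through that of coinciding pairs (`mom_share`), and then the moment of
disjoint pairs through that of pairs sharing one index (`mom_disjoint`). The moment of coinciding
pairs is found by averaging the deterministic quantity `∑ a b, K a b ^ 2` (`mom_diag_value`). No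
joint probabilities of the assignment have to be computed.
-/

open Finset

/-- Expectation under the uniform distribution on permutations of `Fin N`. -/
noncomputable def pE {N : ℕ} (f : Equiv.Perm (Fin N) → ℝ) : ℝ :=
  (∑ π : Equiv.Perm (Fin N), f π) / (Fintype.card (Equiv.Perm (Fin N)) : ℝ)

/-- Covariance under the uniform distribution on permutations of `Fin N`. -/
noncomputable def pCov {N : ℕ} (f g : Equiv.Perm (Fin N) → ℝ) : ℝ :=
  pE (fun π => (f π - pE f) * (g π - pE g))

/-- Within-first-group sum: sums `W i j` over pairs both assigned to the first `m` labels. -/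
noncomputable def Ux {N : ℕ} (W : Matrix (Fin N) (Fin N) ℝ) (m : ℕ)
    (π : Equiv.Perm (Fin N)) : ℝ :=
  ∑ i, ∑ j, if (π i : ℕ) < m ∧ (π j : ℕ) < m then W i j else 0

/-- Within-second-group sum: sums `W i j` over pairs both assigned to labels `> m`. -/
noncomputable def Uy {N : ℕ} (W : Matrix (Fin N) (Fin N) ℝ) (m : ℕ)
    (π : Equiv.Perm (Fin N)) : ℝ :=
  ∑ i, ∑ j, if m ≤ (π i : ℕ) ∧ m ≤ (π j : ℕ) then W i j else 0

/-! ### Mixed moments of a randomly permuted matrix with zero row sums -/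

/-- The unnormalised mixed moment of the entries `(i, j)` and `(k, l)` of the matrix `K` after a
uniformly random simultaneous permutation of its rows and columns. -/
noncomputable def mom {N : ℕ} (K : Fin N → Fin N → ℝ) (i j k l : Fin N) : ℝ :=
  ∑ π : Equiv.Perm (Fin N), K (π i) (π j) * K (π k) (π l)

lemma sum_perm_mul_right {N : ℕ} (F : Equiv.Perm (Fin N) → ℝ) (σ : Equiv.Perm (Fin N)) :
    ∑ π, F (π * σ) = ∑ π, F π :=
  Equiv.sum_comp (Equiv.mulRight σ) F

lemma mom_perm {N : ℕ} (K : Fin N → Fin N → ℝ) (σ : Equiv.Perm (Fin N)) (i j k l : Fin N) :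
    mom K (σ i) (σ j) (σ k) (σ l) = mom K i j k l :=
  sum_perm_mul_right (fun π => K (π i) (π j) * K (π k) (π l)) σ

lemma mom_swap_left {N : ℕ} {K : Fin N → Fin N → ℝ} (hK : ∀ a b, K a b = K b a)
    (i j k l : Fin N) : mom K i j k l = mom K j i k l := by
  unfold mom
  exact sum_congr rfl fun π _ => by rw [hK (π i)]

lemma mom_swap_right {N : ℕ} {K : Fin N → Fin N → ℝ} (hK : ∀ a b, K a b = K b a)
    (i j k l : Fin N) : mom K i j k l = mom K i j l k := by
  unfold mom
  exact sum_congr rfl fun π _ => by rw [hK (π k)]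

lemma mom_self {N : ℕ} {K : Fin N → Fin N → ℝ} (hd : ∀ a, K a a = 0)
    (i j k : Fin N) : mom K i j k k = 0 := by
  simp [mom, hd]

lemma mom_sum_last {N : ℕ} {K : Fin N → Fin N → ℝ} (hr : ∀ a, ∑ b, K a b = 0)
    (i j k : Fin N) : ∑ l, mom K i j k l = 0 := by
  unfold mom
  rw [sum_comm]
  refine sum_eq_zero fun π _ => ?_
  rw [← mul_sum, Equiv.sum_comp π (fun b => K (π k) b), hr, mul_zero]

/-- A function on `Fin N` constant outside `S` sums to its sum over `S` plus `N - |S|` times that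
constant. -/
lemma sum_const_off {N : ℕ} (S : Finset (Fin N)) (f : Fin N → ℝ) (c : ℝ)
    (h : ∀ l, l ∉ S → f l = c) : ∑ l, f l = ∑ l ∈ S, f l + ((N : ℝ) - S.card) * c := by
  rw [← sum_add_sum_compl S f]
  congr 1
  rw [sum_congr rfl (fun l hl => h l (mem_compl.1 hl)), sum_const, card_compl, nsmul_eq_mul,
    Nat.cast_sub (card_le_univ S)]
  simp

lemma mean_zero {N : ℕ} (hN : 4 ≤ N) {K : Fin N → Fin N → ℝ} (hd : ∀ a, K a a = 0)
    (hr : ∀ a, ∑ b, K a b = 0) (i j : Fin N) :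
    ∑ π : Equiv.Perm (Fin N), K (π i) (π j) = 0 := by
  by_cases hij : i = j
  · subst hij
    simp [hd]
  have h := sum_const_off {i} (fun l => ∑ π : Equiv.Perm (Fin N), K (π i) (π l))
    (∑ π : Equiv.Perm (Fin N), K (π i) (π j)) (by
      intro l hl
      rw [mem_singleton] at hl
      have := sum_perm_mul_right (fun π => K (π i) (π j)) (Equiv.swap j l)
      simpa [Equiv.Perm.mul_apply, Equiv.swap_apply_of_ne_of_ne hij (Ne.symm hl)] using this)
  have h0 : ∑ l, ∑ π : Equiv.Perm (Fin N), K (π i) (π l) = 0 := by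
    rw [sum_comm]
    exact sum_eq_zero fun π _ => by rw [Equiv.sum_comp π (fun b => K (π i) b), hr]
  rw [h0] at h
  simp only [sum_singleton, hd, sum_const_zero, card_singleton, Nat.cast_one, zero_add] at h
  have hN' : (4 : ℝ) ≤ N := by exact_mod_cast hN
  rcases mul_eq_zero.1 h.symm with h | h
  · linarith
  · exact h

/-- The second moment of an off-diagonal entry does not depend on the entry: the symmetric group is
doubly transitive. -/
lemma mom_diag_const {N : ℕ} {K : Fin N → Fin N → ℝ} (hK : ∀ a b, K a b = K b a)
    {i j a b : Fin N} (hij : i ≠ j) (hab : a ≠ b) : mom K a b a b = mom K i j i j := by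
  have hsymm : ∀ x y, mom K x y x y = mom K y x y x := fun x y => by
    rw [mom_swap_left hK, mom_swap_right hK]
  have hrow : ∀ x y z, x ≠ y → x ≠ z → mom K x y x y = mom K x z x z := fun x y z hy hz => by
    have := mom_perm K (Equiv.swap y z) x y x y
    rw [Equiv.swap_apply_of_ne_of_ne hy hz, Equiv.swap_apply_left] at this
    exact this.symm
  by_cases hbi : b = i
  · subst hbi
    rw [hsymm, hrow b a j hab.symm hij]
  · rw [hsymm, hrow b a i hab.symm hbi, hsymm, hrow i b j (Ne.symm hbi) hij]

lemma mom_diag_value {N : ℕ} {K : Fin N → Fin N → ℝ} (hK : ∀ a b, K a b = K b a)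
    (hd : ∀ a, K a a = 0) {i j : Fin N} (hij : i ≠ j) :
    (N : ℝ) * ((N : ℝ) - 1) * mom K i j i j
      = (Fintype.card (Equiv.Perm (Fin N)) : ℝ) * ∑ a, ∑ b, K a b ^ 2 := by
  have h1 : ∑ a, ∑ b, mom K a b a b = (N : ℝ) * ((N : ℝ) - 1) * mom K i j i j := by
    have : ∀ a, ∑ b, mom K a b a b = ((N : ℝ) - 1) * mom K i j i j := fun a => by
      rw [sum_const_off {a} _ (mom K i j i j) (fun b hb => mom_diag_const hK hij
        (fun h => hb (by simp [h])))]
      simp [mom_self hd]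
    simp [this, mul_assoc]
  have h2 : ∑ π : Equiv.Perm (Fin N), ∑ a, ∑ b, K (π a) (π b) ^ 2
      = ∑ a, ∑ b, mom K a b a b := by
    rw [sum_comm]
    refine sum_congr rfl fun a _ => ?_
    rw [sum_comm]
    exact sum_congr rfl fun b _ => by simp only [mom, pow_two]
  rw [← h1, ← h2]
  have : ∀ π : Equiv.Perm (Fin N), ∑ a, ∑ b, K (π a) (π b) ^ 2 = ∑ a, ∑ b, K a b ^ 2 := fun π => by
    rw [← Equiv.sum_comp π (fun a => ∑ b, K a b ^ 2)]
    exact sum_congr rfl fun a _ => Equiv.sum_comp π (fun b => K (π a) b ^ 2)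
  simp [this]

lemma mom_share {N : ℕ} {K : Fin N → Fin N → ℝ}
    (hd : ∀ a, K a a = 0) (hr : ∀ a, ∑ b, K a b = 0) {i j l : Fin N}
    (hij : i ≠ j) (hil : i ≠ l) (hjl : j ≠ l) :
    mom K i j i j + ((N : ℝ) - 2) * mom K i j i l = 0 := by
  have h := sum_const_off {i, j} (fun t => mom K i j i t) (mom K i j i l) (by
    intro t ht
    simp only [mem_insert, mem_singleton, not_or] at ht
    have := mom_perm K (Equiv.swap l t) i j i l
    rwa [Equiv.swap_apply_of_ne_of_ne hil (Ne.symm ht.1),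
      Equiv.swap_apply_of_ne_of_ne hjl (Ne.symm ht.2), Equiv.swap_apply_left] at this)
  rw [mom_sum_last hr, sum_pair hij, card_pair hij, mom_self hd] at h
  push_cast at h
  linarith

lemma mom_disjoint {N : ℕ} {K : Fin N → Fin N → ℝ} (hK : ∀ a b, K a b = K b a)
    (hd : ∀ a, K a a = 0) (hr : ∀ a, ∑ b, K a b = 0) {i j k l : Fin N}
    (hij : i ≠ j) (hik : i ≠ k) (hjk : j ≠ k) (hil : i ≠ l) (hjl : j ≠ l) (hkl : k ≠ l) :
    mom K i j i k + mom K j i j k + ((N : ℝ) - 3) * mom K i j k l = 0 := by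
  have h := sum_const_off {i, j, k} (fun t => mom K i j k t) (mom K i j k l) (by
    intro t ht
    simp only [mem_insert, mem_singleton, not_or] at ht
    have := mom_perm K (Equiv.swap l t) i j k l
    rwa [Equiv.swap_apply_of_ne_of_ne hil (Ne.symm ht.1),
      Equiv.swap_apply_of_ne_of_ne hjl (Ne.symm ht.2.1),
      Equiv.swap_apply_of_ne_of_ne hkl (Ne.symm ht.2.2), Equiv.swap_apply_left] at this)
  have hc : ({i, j, k} : Finset (Fin N)).card = 3 := card_eq_three.2 ⟨i, j, k, hij, hik, hjk, rfl⟩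
  rw [mom_sum_last hr, sum_insert (by simp [hij, hik]), sum_pair hjk, hc, mom_self hd,
    mom_swap_right hK i j k i, mom_swap_right hK i j k j, mom_swap_left hK i j j k] at h
  push_cast at h
  linarith

/-- All mixed moments in terms of the common second moment `c`. The right-hand side is the function
of the overlap pattern with values `c`, `-c/(N-2)`, `2c/((N-2)(N-3))` on coinciding, once-meeting
and disjoint pairs, written as a polynomial in the indicators of coincidences; `i ≠ j`
and `k ≠ l` make `(i = k) + (i = l) + (j = k) + (j = l)` count the shared indices. -/
lemma mom_formula {N : ℕ} (hN : 4 ≤ N) {K : Fin N → Fin N → ℝ} (hK : ∀ a b, K a b = K b a)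
    (hd : ∀ a, K a a = 0) (hr : ∀ a, ∑ b, K a b = 0) (c : ℝ)
    (hc : ∀ i j, i ≠ j → mom K i j i j = c) {i j k l : Fin N} (hij : i ≠ j) (hkl : k ≠ l) :
    mom K i j k l =
      c * ((N : ℝ) - 1) / ((N : ℝ) - 3) *
          ((if i = k then 1 else 0) * (if j = l then 1 else 0)
            + (if i = l then 1 else 0) * (if j = k then 1 else 0))
        - c * ((N : ℝ) - 1) / (((N : ℝ) - 2) * ((N : ℝ) - 3)) *
          ((if i = k then 1 else 0) + (if j = l then 1 else 0)
            + (if i = l then 1 else 0) + (if j = k then 1 else 0))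
        + 2 * c / (((N : ℝ) - 2) * ((N : ℝ) - 3)) := by
  have hN' : (4 : ℝ) ≤ N := by exact_mod_cast hN
  have h2 : (N : ℝ) - 2 ≠ 0 := by linarith
  have h3 : (N : ℝ) - 3 ≠ 0 := by linarith
  have share : ∀ x y z, x ≠ y → x ≠ z → y ≠ z → mom K x y x z = -c / ((N : ℝ) - 2) :=
    fun x y z hxy hxz hyz => by
      have := mom_share hd hr hxy hxz hyz
      rw [hc x y hxy] at this
      field_simp
      linarith
  by_cases hik : i = k
  · subst hik
    by_cases hjl : j = l
    · subst hjl
      rw [hc i j hij]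
      simp only [if_true, hij, hij.symm, if_false]
      field_simp
      ring
    · rw [share i j l hij hkl hjl]
      simp only [if_true, hij.symm, hkl, hjl, if_false]
      field_simp
      ring
  by_cases hil : i = l
  · subst hil
    rw [mom_swap_right hK]
    by_cases hjk : j = k
    · subst hjk
      rw [hc i j hij]
      simp only [if_true, hij, hij.symm, if_false]
      field_simp
      ring
    · rw [share i j k hij hik hjk]
      simp only [if_true, hij.symm, hik, hjk, if_false]
      field_simp
      ring
  rw [mom_swap_left hK]
  by_cases hjk : j = k
  · subst hjk
    rw [share j i l hij.symm hkl hil]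
    simp only [if_true, hij, hkl, hil, if_false]
    field_simp
    ring
  by_cases hjl : j = l
  · subst hjl
    rw [mom_swap_right hK, share j i k hij.symm hjk hik]
    simp only [if_true, hij, hjk, hik, if_false]
    field_simp
    ring
  · have := mom_disjoint hK hd hr hij hik hjk hil hjl hkl
    rw [share i j k hij hik hjk, share j i k hij.symm hjk hik] at this
    rw [mom_swap_left hK]
    simp only [hik, hjl, hil, hjk, if_false]
    field_simp at this ⊢
    linarith

/-! ### Covariance of linear statistics -/

/-- Permutation covariance (up to normalisation by `N!`) of the linear statistics that two weight
matrices `W`, `W'` form with a matrix `K` whose rows sum to zero. -/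
lemma sum_perm_stat_mul_stat {N : ℕ} (hN : 4 ≤ N) {K : Fin N → Fin N → ℝ}
    (hK : ∀ a b, K a b = K b a)
    (hd : ∀ a, K a a = 0) (hr : ∀ a, ∑ b, K a b = 0) (c : ℝ)
    (hc : ∀ i j, i ≠ j → mom K i j i j = c) (W W' : Matrix (Fin N) (Fin N) ℝ)
    (hsym : W.IsSymm) (hdiag : ∀ i, W i i = 0)
    (hsym' : W'.IsSymm) (hdiag' : ∀ i, W' i i = 0) :
    ∑ π : Equiv.Perm (Fin N), (∑ i, ∑ j, W i j * K (π i) (π j)) * (∑ k, ∑ l, W' k l * K (π k) (π l))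
      = c * ((N : ℝ) - 1) / ((N : ℝ) - 3) * (2 * ∑ i, ∑ j, W i j * W' i j)
        - c * ((N : ℝ) - 1) / (((N : ℝ) - 2) * ((N : ℝ) - 3)) *
          (4 * ∑ i, ∑ j, ∑ r, W i j * W' i r)
        + 2 * c / (((N : ℝ) - 2) * ((N : ℝ) - 3)) *
          ((∑ i, ∑ j, W i j) * (∑ i, ∑ j, W' i j)) := by
  have s : ∀ i j, W i j = W j i := fun i j => hsym.apply j i
  have s' : ∀ i j, W' i j = W' j i := fun i j => hsym'.apply j i
  have e1 : ∑ π : Equiv.Perm (Fin N),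
        (∑ i, ∑ j, W i j * K (π i) (π j)) * (∑ k, ∑ l, W' k l * K (π k) (π l))
      = ∑ i, ∑ j, ∑ k, ∑ l, W i j * W' k l * mom K i j k l := by
    simp only [sum_mul]
    rw [sum_comm]
    refine sum_congr rfl fun i _ => ?_
    rw [sum_comm]
    refine sum_congr rfl fun j _ => ?_
    simp only [mul_sum]
    rw [sum_comm]
    refine sum_congr rfl fun k _ => ?_
    rw [sum_comm]
    refine sum_congr rfl fun l _ => ?_
    rw [mom, mul_sum]
    exact sum_congr rfl fun π _ => by ring
  rw [e1]
  have e2 : ∀ i j k l, W i j * W' k l * mom K i j k l =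
      c * ((N : ℝ) - 1) / ((N : ℝ) - 3) *
          (W i j * W' k l * ((if i = k then 1 else 0) * (if j = l then 1 else 0))
            + W i j * W' k l * ((if i = l then 1 else 0) * (if j = k then 1 else 0)))
        - c * ((N : ℝ) - 1) / (((N : ℝ) - 2) * ((N : ℝ) - 3)) *
          (W i j * W' k l * (if i = k then 1 else 0) + W i j * W' k l * (if j = l then 1 else 0)
            + W i j * W' k l * (if i = l then 1 else 0) + W i j * W' k l * (if j = k then 1 else 0))
        + 2 * c / (((N : ℝ) - 2) * ((N : ℝ) - 3)) * (W i j * W' k l) := fun i j k l => by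
    by_cases hij : i = j
    · subst hij
      simp [hdiag]
    by_cases hkl : k = l
    · subst hkl
      simp [hdiag']
    rw [mom_formula hN hK hd hr c hc hij hkl]
    ring
  simp only [e2, sum_add_distrib, sum_sub_distrib, ← mul_sum]
  have t1 : ∑ i, ∑ j, ∑ k, ∑ l, W i j * W' k l * ((if i = k then 1 else 0) * (if j = l then 1 else 0))
      = ∑ i, ∑ j, W i j * W' i j := by
    refine sum_congr rfl fun i _ => sum_congr rfl fun j _ => ?_
    rw [sum_eq_single i (by intro k _ hk; simp [hk.symm]) (by simp)]
    simp
  have t2 : ∑ i, ∑ j, ∑ k, ∑ l, W i j * W' k l * ((if i = l then 1 else 0) * (if j = k then 1 else 0))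
      = ∑ i, ∑ j, W i j * W' i j := by
    refine sum_congr rfl fun i _ => sum_congr rfl fun j _ => ?_
    rw [sum_eq_single j (by intro k _ hk; simp [hk.symm]) (by simp)]
    simp [s' j i]
  have t3 : ∑ i, ∑ j, ∑ k, ∑ l, W i j * W' k l * (if i = k then 1 else 0)
      = ∑ i, ∑ j, ∑ r, W i j * W' i r := by
    refine sum_congr rfl fun i _ => sum_congr rfl fun j _ => ?_
    rw [sum_eq_single i (by intro k _ hk; simp [hk.symm]) (by simp)]
    simp
  have t4 : ∑ i, ∑ j, ∑ k, ∑ l, W i j * W' k l * (if i = l then 1 else 0)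
      = ∑ i, ∑ j, ∑ r, W i j * W' i r := by
    refine sum_congr rfl fun i _ => sum_congr rfl fun j _ => sum_congr rfl fun k _ => ?_
    simp [s' k i]
  have t5 : ∑ i, ∑ j, ∑ k, ∑ l, W i j * W' k l * (if j = k then 1 else 0)
      = ∑ i, ∑ j, ∑ r, W i j * W' i r := by
    rw [← t3, sum_comm]
    exact sum_congr rfl fun i _ => sum_congr rfl fun j _ => by simp only [s j i]
  have t6 : ∑ i, ∑ j, ∑ k, ∑ l, W i j * W' k l * (if j = l then 1 else 0)
      = ∑ i, ∑ j, ∑ r, W i j * W' i r := by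
    rw [← t4, sum_comm]
    exact sum_congr rfl fun i _ => sum_congr rfl fun j _ => by simp only [s j i]
  have t7 : ∑ i, ∑ j, W i j * ∑ k, ∑ l, W' k l
      = (∑ i, ∑ j, W i j) * (∑ i, ∑ j, W' i j) := by
    simp only [sum_mul]
  simp only [← mul_sum] at t1 t2 t3 t4 t5 t6 ⊢
  rw [t1, t2, t3, t4, t5, t6, t7]
  ring

/-- The covariance of two statistics is unaffected by constants; here `μ` and `μ'` are their
means, as `G` and `G'` are centred. -/
lemma pCov_of_centred {N : ℕ} (G G' : Equiv.Perm (Fin N) → ℝ) (μ μ' : ℝ)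
    (h : ∑ π, G π = 0) (h' : ∑ π, G' π = 0) :
    pCov (fun π => G π + μ) (fun π => G' π + μ')
      = (∑ π, G π * G' π) / (Fintype.card (Equiv.Perm (Fin N)) : ℝ) := by
  have hc : (Fintype.card (Equiv.Perm (Fin N)) : ℝ) ≠ 0 := by
    exact_mod_cast Fintype.card_ne_zero
  have e : ∀ (F : Equiv.Perm (Fin N) → ℝ) (ν : ℝ), ∑ π, F π = 0 → pE (fun π => F π + ν) = ν := by
    intro F ν hF
    unfold pE
    rw [sum_add_distrib, hF, sum_const, card_univ, nsmul_eq_mul, zero_add,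
      mul_div_cancel_left₀ _ hc]
  unfold pCov
  rw [e G μ h, e G' μ' h']
  simp [pE]

/-! ### The kernel of the weighted statistic -/

/-- Indicator that a label belongs to the first group. -/
noncomputable def grp {N : ℕ} (m : ℕ) (a : Fin N) : ℝ := if (a : ℕ) < m then 1 else 0

/-- The centred kernel of the weighted statistic, as a function of the labels of a pair, with zero
diagonal. -/
noncomputable def kernel (m n N : ℕ) (a b : Fin N) : ℝ :=
  (1 - if a = b then 1 else 0) *
    (((n : ℝ) - 1) / ((N : ℝ) - 2) * (grp m a * grp m b)
      + ((m : ℝ) - 1) / ((N : ℝ) - 2) * ((1 - grp m a) * (1 - grp m b))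
      - ((m : ℝ) - 1) * ((n : ℝ) - 1) / (((N : ℝ) - 1) * ((N : ℝ) - 2)))

lemma grp_sq {N : ℕ} (m : ℕ) (a : Fin N) : grp m a * grp m a = grp m a := by
  unfold grp
  split_ifs <;> simp

lemma sum_grp {m N : ℕ} (h : m ≤ N) : ∑ a : Fin N, grp m a = (m : ℝ) := by
  unfold grp
  rw [Fin.sum_univ_eq_sum_range (fun a => if a < m then (1 : ℝ) else 0) N, ← sum_filter]
  have : (range N).filter (fun a => a < m) = range m := by
    ext a
    simp only [mem_filter, mem_range]
    omega
  simp [this]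

lemma kernel_symm (m n N : ℕ) (a b : Fin N) : kernel m n N a b = kernel m n N b a := by
  unfold kernel
  simp only [eq_comm (a := a)]
  ring

lemma kernel_diag (m n N : ℕ) (a : Fin N) : kernel m n N a a = 0 := by
  simp [kernel]

lemma kernel_row_sum {m n N : ℕ} (hm : 2 ≤ m) (hn : 2 ≤ n) (hN : N = m + n) (a : Fin N) :
    ∑ b, kernel m n N a b = 0 := by
  have hm' : (2 : ℝ) ≤ m := by exact_mod_cast hm
  have hn' : (2 : ℝ) ≤ n := by exact_mod_cast hn
  have hN' : (N : ℝ) = m + n := by exact_mod_cast hN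
  have h1 : (m : ℝ) + n - 1 ≠ 0 := by linarith
  have h2 : (m : ℝ) + n - 2 ≠ 0 := by linarith
  have hs := sum_grp (show m ≤ N by omega)
  have hx := grp_sq m a
  unfold kernel
  simp only [sub_mul, one_mul, ite_mul, zero_mul, sum_sub_distrib, sum_add_distrib, ← mul_sum,
    mul_sub, mul_one, sum_ite_eq, mem_univ, if_true, hs, sum_const, card_univ, Fintype.card_fin,
    nsmul_eq_mul, hx, hN']
  field_simp
  ring

lemma sum_kernel_sq {m n N : ℕ} (hm : 2 ≤ m) (hn : 2 ≤ n) (hN : N = m + n) :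
    ∑ a, ∑ b, kernel m n N a b ^ 2
      = (m : ℝ) * n * (m - 1) * (n - 1) / ((N - 1) * (N - 2)) := by
  have hm' : (2 : ℝ) ≤ m := by exact_mod_cast hm
  have hn' : (2 : ℝ) ≤ n := by exact_mod_cast hn
  have hN' : (N : ℝ) = m + n := by exact_mod_cast hN
  have h1 : (m : ℝ) + n - 1 ≠ 0 := by linarith
  have h2 : (m : ℝ) + n - 2 ≠ 0 := by linarith
  have hs := sum_grp (show m ≤ N by omega)
  set e : ℝ := ((n : ℝ) - 1) / ((N : ℝ) - 2) with he
  set f : ℝ := ((m : ℝ) - 1) / ((N : ℝ) - 2) with hf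
  set μ : ℝ := ((m : ℝ) - 1) * ((n : ℝ) - 1) / (((N : ℝ) - 1) * ((N : ℝ) - 2)) with hμ
  -- The two groups have disjoint indicators, so the square has no cross terms between them.
  have hk : ∀ a b : Fin N, kernel m n N a b ^ 2 =
      (1 - if a = b then 1 else 0) *
        ((e ^ 2 - 2 * μ * e) * (grp m a * grp m b)
          + (f ^ 2 - 2 * μ * f) * ((1 - grp m a) * (1 - grp m b)) + μ ^ 2) := by
    intro a b
    unfold kernel grp
    rw [← he, ← hf, ← hμ]
    split_ifs <;> ring
  have hrow : ∀ a : Fin N, ∑ b, kernel m n N a b ^ 2 =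
      (e ^ 2 - 2 * μ * e) * (m - 1) * grp m a
        + (f ^ 2 - 2 * μ * f) * (n - 1) * (1 - grp m a) + (N - 1) * μ ^ 2 := by
    intro a
    have hx := grp_sq m a
    simp only [hk]
    simp only [sub_mul, one_mul, ite_mul, zero_mul, sum_sub_distrib, sum_add_distrib, ← mul_sum,
      mul_sub, mul_one, sum_ite_eq, mem_univ, if_true, hs, sum_const, card_univ, Fintype.card_fin,
      nsmul_eq_mul, hx, hN']
    ring
  simp only [hrow, sum_add_distrib, ← mul_sum, sum_sub_distrib, hs, sum_const, card_univ,
    Fintype.card_fin, nsmul_eq_mul, mul_one]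
  rw [he, hf, hμ, hN']
  field_simp
  ring

/-- The weighted statistic is the linear statistic of the centred kernel, up to a constant. -/
lemma weighted_eq {m n N : ℕ} (W : Matrix (Fin N) (Fin N) ℝ) (hdiag : ∀ i, W i i = 0)
    (π : Equiv.Perm (Fin N)) :
    (((n : ℝ) - 1) * Ux W m π + ((m : ℝ) - 1) * Uy W m π) / ((N : ℝ) - 2)
      = ∑ i, ∑ j, W i j * kernel m n N (π i) (π j)
        + ((m : ℝ) - 1) * ((n : ℝ) - 1) / (((N : ℝ) - 1) * ((N : ℝ) - 2)) * ∑ i, ∑ j, W i j := by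
  unfold Ux Uy
  simp only [mul_sum, ← sum_add_distrib, sum_div]
  refine sum_congr rfl fun i _ => sum_congr rfl fun j _ => ?_
  by_cases hij : i = j
  · subst hij
    simp [hdiag]
  have hπ : π i ≠ π j := fun h => hij (π.injective h)
  unfold kernel grp
  by_cases h1 : (π i : ℕ) < m <;> by_cases h2 : (π j : ℕ) < m <;>
    simp only [h1, h2, hπ, not_lt.1, not_le.2, and_self, and_true, and_false, if_true,
      if_false, not_false_iff] <;> ring

/-! ### The covariance formula -/

theorem stmt_5 (m n N : ℕ) (hm : 2 ≤ m) (hn : 2 ≤ n) (hN : N = m + n)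
    (W W' : Matrix (Fin N) (Fin N) ℝ)
    (hsym : W.IsSymm) (hdiag : ∀ i, W i i = 0)
    (hsym' : W'.IsSymm) (hdiag' : ∀ i, W' i i = 0) :
    pCov
      (fun π => (((n : ℝ) - 1) * Ux W m π + ((m : ℝ) - 1) * Uy W m π) / ((N : ℝ) - 2))
      (fun π => (((n : ℝ) - 1) * Ux W' m π + ((m : ℝ) - 1) * Uy W' m π) / ((N : ℝ) - 2)) =
      (2 * (m : ℝ) * (n : ℝ) * ((m : ℝ) - 1) * ((n : ℝ) - 1)
          / ((N : ℝ) * ((N : ℝ) - 1) * ((N : ℝ) - 2) * ((N : ℝ) - 3))) *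
        (((∑ i, ∑ j, W i j * W' i j)
            - (∑ i, ∑ j, W i j) * (∑ i, ∑ j, W' i j) / ((N : ℝ) * ((N : ℝ) - 1)))
          - (2 / ((N : ℝ) - 2)) *
            ((∑ i, ∑ j, ∑ r, W i j * W' i r)
              - (∑ i, ∑ j, W i j) * (∑ i, ∑ j, W' i j) / (N : ℝ))) := by
  have hm' : (2 : ℝ) ≤ m := by exact_mod_cast hm
  have hn' : (2 : ℝ) ≤ n := by exact_mod_cast hn
  have hN' : (N : ℝ) = m + n := by exact_mod_cast hN
  have h0 : (N : ℝ) ≠ 0 := by linarith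
  have h1 : (N : ℝ) - 1 ≠ 0 := by linarith
  have h2 : (N : ℝ) - 2 ≠ 0 := by linarith
  have h3 : (N : ℝ) - 3 ≠ 0 := by linarith
  have hN4 : 4 ≤ N := by omega
  have hP : (Fintype.card (Equiv.Perm (Fin N)) : ℝ) ≠ 0 := by
    exact_mod_cast Fintype.card_ne_zero
  have hK := kernel_symm m n N
  have hd := kernel_diag m n N
  have hr := fun a => kernel_row_sum hm hn hN a
  have hc : ∀ i j, i ≠ j → mom (kernel m n N) i j i j
      = (Fintype.card (Equiv.Perm (Fin N)) : ℝ) * ((m : ℝ) * n * (m - 1) * (n - 1))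
        / (N * (N - 1) ^ 2 * (N - 2)) := fun i j hij => by
    have := mom_diag_value hK hd hij
    rw [sum_kernel_sq hm hn hN] at this
    field_simp at this ⊢
    linarith
  have hmean : ∀ V : Matrix (Fin N) (Fin N) ℝ,
      ∑ π : Equiv.Perm (Fin N), ∑ i, ∑ j, V i j * kernel m n N (π i) (π j) = 0 := fun V => by
    rw [sum_comm]
    refine sum_eq_zero fun i _ => ?_
    rw [sum_comm]
    exact sum_eq_zero fun j _ => by rw [← mul_sum, mean_zero hN4 hd hr, mul_zero]
  simp only [weighted_eq W hdiag, weighted_eq W' hdiag']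
  rw [pCov_of_centred _ _ _ _ (hmean W) (hmean W'),
    sum_perm_stat_mul_stat hN4 hK hd hr _ hc W W' hsym hdiag hsym' hdiag']
  generalize ∑ i, ∑ j, W i j * W' i j = w2
  generalize ∑ i, ∑ j, ∑ r, W i j * W' i r = w3
  generalize ∑ i, ∑ j, W i j = w1
  generalize ∑ i, ∑ j, W' i j = w1'
  generalize (Fintype.card (Equiv.Perm (Fin N)) : ℝ) = P at *
  field_simp
  ring
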